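/- There exists no monic real polynomial U = x^9 + a_8 x^8 + ⋯ + a_0 of degree 9 satisfying simultaneously: (i) its coefficient signs lie in the closure of Σ_{1,7,2} (a_j ≤ 0 for 2 ≤ j ≤ 8, a_1 ≥ 0, a_0 ≥ 0), of Σ_{1,6,3} (a_j ≤ 0 for 3 ≤ j ≤ 8, a_2 ≥ 0, a_1 ≥ 0, a_0 ≥ 0), or of Σ_{2,6,2} (a_8 ≥ 0, a_j ≤ 0 for 2 ≤ j ≤ 7, a_1 ≥ 0, a_0 ≥ 0); (ii) U has 7 negative real roots counted with multiplicity; (iii) U has either a pair of nonreal complex conjugate roots or a positive real root of multiplicity at least 2. -/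

import Mathlib

/-!
Write `U = A * Q`, where `A = ∏ (X + y i)` collects the seven negative roots (`y i > 0`) and
`Q = X ^ 2 + b X + c` is monic. The assumption on the two remaining roots forces `b ^ 2 ≤ 4 c`.
With `e k` the elementary symmetric functions of the `y i`, the coefficient of `X ^ (9 - k)` in `U`
is `e k + b * e (k - 1) + c * e (k - 2)`. Put `s = -b`.

* For `Σ_{1,7,2}` and `Σ_{1,6,3}`, the coefficients of `X ^ 8` and `X ^ 4` give `e 1 ≤ s` and
  `e 5 + c * e 3 ≤ s * e 4`. Since `4 * e 4 ≤ e 1 * e 3` (`four_mul_esym_four_le`),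
  `c * e 3 < s * e 4 ≤ s * e 1 * e 3 / 4 ≤ s ^ 2 * e 3 / 4 ≤ c * e 3`, a contradiction.
* For `Σ_{2,6,2}`, the coefficients of `X ^ 7` and `X ^ 2` give `e 2 < s * e 1` and
  `c * e 5 < s * e 6`. Multiplying, `c * e 2 * e 5 < s ^ 2 * e 1 * e 6 ≤ 4 * c * e 1 * e 6`,
  which contradicts `4 * e 1 * e 6 ≤ e 2 * e 5` (`four_mul_esym_one_six_le`).
-/

open Polynomial

/-- The coefficient signs of a degree-9 polynomial lie in the closure of
`Σ_{1,7,2} = (+,-,-,-,-,-,-,-,+,+)`. -/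
def Closure172 (P : Polynomial ℝ) : Prop :=
  (∀ j, 2 ≤ j → j ≤ 8 → P.coeff j ≤ 0) ∧ 0 ≤ P.coeff 1 ∧ 0 ≤ P.coeff 0

/-- The coefficient signs lie in the closure of `Σ_{1,6,3} = (+,-,-,-,-,-,-,+,+,+)`. -/
def Closure163 (P : Polynomial ℝ) : Prop :=
  (∀ j, 3 ≤ j → j ≤ 8 → P.coeff j ≤ 0) ∧ 0 ≤ P.coeff 2 ∧ 0 ≤ P.coeff 1 ∧ 0 ≤ P.coeff 0

/-- The coefficient signs lie in the closure of `Σ_{2,6,2} = (+,+,-,-,-,-,-,-,+,+)`. -/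
def Closure262 (P : Polynomial ℝ) : Prop :=
  0 ≤ P.coeff 8 ∧ (∀ j, 2 ≤ j → j ≤ 7 → P.coeff j ≤ 0) ∧ 0 ≤ P.coeff 1 ∧ 0 ≤ P.coeff 0

/-- The `k`-th elementary symmetric function of the entries of a list, by Pascal's recursion. -/
def esym : List ℝ → ℕ → ℝ
  | _, 0 => 1
  | [], _ + 1 => 0
  | y :: l, k + 1 => esym l (k + 1) + y * esym l k

lemma esym_pos_seven {y₁ y₂ y₃ y₄ y₅ y₆ y₇ : ℝ} (h₁ : 0 < y₁) (h₂ : 0 < y₂) (h₃ : 0 < y₃)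
    (h₄ : 0 < y₄) (h₅ : 0 < y₅) (h₆ : 0 < y₆) (h₇ : 0 < y₇) {k : ℕ} (hk : k ≤ 7) :
    0 < esym [y₁, y₂, y₃, y₄, y₅, y₆, y₇] k := by
  interval_cases k <;> simp only [esym] <;> ring_nf <;> positivity

/-- Each squarefree monomial of degree `4` occurs four times in `e 1 * e 3`. -/
lemma four_mul_esym_four_le {y₁ y₂ y₃ y₄ y₅ y₆ y₇ : ℝ} (h₁ : 0 < y₁) (h₂ : 0 < y₂) (h₃ : 0 < y₃)
    (h₄ : 0 < y₄) (h₅ : 0 < y₅) (h₆ : 0 < y₆) (h₇ : 0 < y₇) :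
    4 * esym [y₁, y₂, y₃, y₄, y₅, y₆, y₇] 4 ≤
      esym [y₁, y₂, y₃, y₄, y₅, y₆, y₇] 1 * esym [y₁, y₂, y₃, y₄, y₅, y₆, y₇] 3 := by
  rw [← sub_nonneg]
  simp only [esym]
  ring_nf
  positivity

set_option maxHeartbeats 4000000 in
set_option maxRecDepth 20000 in
/-- A weak form of Newton's inequality `9 * e 1 * e 6 ≤ e 2 * e 5` in seven variables. In
`e 2 * e 5 - 4 * e 1 * e 6` only the monomial `y₁ ⋯ y₇` has a negative coefficient, namely `-7`,
while each `y i ^ 2 * ∏_{k ≠ i, j} y k` has coefficient `1`; so four terms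
`(y i - y j) ^ 2 * ∏_{k ≠ i, j} y k`, each contributing `-2` to the former coefficient, can be
split off to leave only positive coefficients. -/
lemma four_mul_esym_one_six_le {y₁ y₂ y₃ y₄ y₅ y₆ y₇ : ℝ} (h₁ : 0 < y₁) (h₂ : 0 < y₂)
    (h₃ : 0 < y₃) (h₄ : 0 < y₄) (h₅ : 0 < y₅) (h₆ : 0 < y₆) (h₇ : 0 < y₇) :
    4 * (esym [y₁, y₂, y₃, y₄, y₅, y₆, y₇] 1 * esym [y₁, y₂, y₃, y₄, y₅, y₆, y₇] 6) ≤
      esym [y₁, y₂, y₃, y₄, y₅, y₆, y₇] 2 * esym [y₁, y₂, y₃, y₄, y₅, y₆, y₇] 5 := by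
  have key : 0 ≤ esym [y₁, y₂, y₃, y₄, y₅, y₆, y₇] 2 * esym [y₁, y₂, y₃, y₄, y₅, y₆, y₇] 5
      - 4 * (esym [y₁, y₂, y₃, y₄, y₅, y₆, y₇] 1 * esym [y₁, y₂, y₃, y₄, y₅, y₆, y₇] 6)
      - ((y₁ - y₂) ^ 2 * (y₃ * y₄ * y₅ * y₆ * y₇) + (y₁ - y₃) ^ 2 * (y₂ * y₄ * y₅ * y₆ * y₇)
        + (y₁ - y₄) ^ 2 * (y₂ * y₃ * y₅ * y₆ * y₇)
        + (y₁ - y₅) ^ 2 * (y₂ * y₃ * y₄ * y₆ * y₇)) := by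
    simp only [esym]
    ring_nf
    positivity
  have hsq : 0 ≤ (y₁ - y₂) ^ 2 * (y₃ * y₄ * y₅ * y₆ * y₇)
        + (y₁ - y₃) ^ 2 * (y₂ * y₄ * y₅ * y₆ * y₇)
        + (y₁ - y₄) ^ 2 * (y₂ * y₃ * y₅ * y₆ * y₇)
        + (y₁ - y₅) ^ 2 * (y₂ * y₃ * y₄ * y₆ * y₇) := by positivity
  linarith

/-- Seven negative roots of a monic polynomial of degree `9` split off, leaving a monic quadratic
factor. -/
lemma exists_factorization {U : ℝ[X]} (hU : U.Monic) (hdeg : U.natDegree = 9)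
    (h7 : U.roots.countP (fun x => x < 0) = 7) :
    ∃ y₁ y₂ y₃ y₄ y₅ y₆ y₇ b c : ℝ,
      0 < y₁ ∧ 0 < y₂ ∧ 0 < y₃ ∧ 0 < y₄ ∧ 0 < y₅ ∧ 0 < y₆ ∧ 0 < y₇ ∧
      U = ((X + C y₁) * (X + C y₂) * (X + C y₃) * (X + C y₄) * (X + C y₅) * (X + C y₆) *
        (X + C y₇)) * (X ^ 2 + C b * X + C c) := by
  rw [Multiset.countP_eq_card_filter] at h7
  have hneg : ∀ x ∈ U.roots.filter (fun x => x < 0), x < 0 := fun x hx =>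
    (Multiset.mem_filter.1 hx).2
  have hdvd := (Multiset.prod_X_sub_C_dvd_iff_le_roots hU.ne_zero
    (U.roots.filter (fun x => x < 0))).2 (Multiset.filter_le _ _)
  generalize U.roots.filter (fun x => x < 0) = s at h7 hneg hdvd
  obtain ⟨x₁, s₁, rfl, k₁⟩ := Multiset.card_eq_succ_iff.1 h7
  obtain ⟨x₂, s₂, rfl, k₂⟩ := Multiset.card_eq_succ_iff.1 k₁
  obtain ⟨x₃, s₃, rfl, k₃⟩ := Multiset.card_eq_succ_iff.1 k₂
  obtain ⟨x₄, s₄, rfl, k₄⟩ := Multiset.card_eq_succ_iff.1 k₃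
  obtain ⟨x₅, s₅, rfl, k₅⟩ := Multiset.card_eq_succ_iff.1 k₄
  obtain ⟨x₆, s₆, rfl, k₆⟩ := Multiset.card_eq_succ_iff.1 k₅
  obtain ⟨x₇, s₇, rfl, k₇⟩ := Multiset.card_eq_succ_iff.1 k₆
  obtain rfl := Multiset.card_eq_zero.1 k₇
  have hA : (Multiset.map (fun a => X - C a)
      (x₁ ::ₘ x₂ ::ₘ x₃ ::ₘ x₄ ::ₘ x₅ ::ₘ x₆ ::ₘ x₇ ::ₘ 0)).prod.Monic :=
    monic_multiset_prod_of_monic _ _ fun a _ => monic_X_sub_C a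
  have hAdeg := natDegree_multiset_prod_X_sub_C_eq_card
    (x₁ ::ₘ x₂ ::ₘ x₃ ::ₘ x₄ ::ₘ x₅ ::ₘ x₆ ::ₘ x₇ ::ₘ (0 : Multiset ℝ))
  obtain ⟨Q, hQ⟩ := hdvd
  have hQm : Q.Monic := hA.of_mul_monic_left (hQ ▸ hU)
  have hQdeg : Q.natDegree = 2 := by
    have := hA.natDegree_mul hQm
    rw [← hQ, hdeg, hAdeg] at this
    simp at this
    omega
  have hQeq : Q = X ^ 2 + C (Q.coeff 1) * X + C (Q.coeff 0) := by
    have h := hQm.as_sum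
    rw [hQdeg] at h
    simp only [Finset.sum_range_succ, Finset.sum_range_zero] at h
    rw [h]
    simp
    ring
  simp only [Multiset.mem_cons, forall_eq_or_imp] at hneg
  obtain ⟨n₁, n₂, n₃, n₄, n₅, n₆, n₇, -⟩ := hneg
  refine ⟨-x₁, -x₂, -x₃, -x₄, -x₅, -x₆, -x₇, Q.coeff 1, Q.coeff 0, by linarith, by linarith,
    by linarith, by linarith, by linarith, by linarith, by linarith, ?_⟩
  rw [← hQeq, hQ]
  simp only [Multiset.map_cons, Multiset.prod_cons, Multiset.map_zero, Multiset.prod_zero, C_neg]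
  ring

lemma prod_eq_sum_esym (y₁ y₂ y₃ y₄ y₅ y₆ y₇ : ℝ) :
    (X + C y₁) * (X + C y₂) * (X + C y₃) * (X + C y₄) * (X + C y₅) * (X + C y₆) * (X + C y₇) =
      ∑ k ∈ Finset.range 8, C (esym [y₁, y₂, y₃, y₄, y₅, y₆, y₇] k) * X ^ (7 - k) := by
  simp only [Finset.sum_range_succ, Finset.sum_range_zero, esym, C_add, C_mul, C_0, C_1]
  ring

lemma coeff_mul_quadratic (e : ℕ → ℝ) (b c : ℝ) {U : ℝ[X]}
    (hU : U = (∑ k ∈ Finset.range 8, C (e k) * X ^ (7 - k)) * (X ^ 2 + C b * X + C c)) :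
    U.coeff 8 = e 1 + b * e 0 ∧ U.coeff 7 = e 2 + b * e 1 + c * e 0 ∧
      U.coeff 4 = e 5 + b * e 4 + c * e 3 ∧ U.coeff 2 = e 7 + b * e 6 + c * e 5 := by
  have h : U = C (e 0) * X ^ 9 + C (e 1 + b * e 0) * X ^ 8 + C (e 2 + b * e 1 + c * e 0) * X ^ 7
      + C (e 3 + b * e 2 + c * e 1) * X ^ 6 + C (e 4 + b * e 3 + c * e 2) * X ^ 5
      + C (e 5 + b * e 4 + c * e 3) * X ^ 4 + C (e 6 + b * e 5 + c * e 4) * X ^ 3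
      + C (e 7 + b * e 6 + c * e 5) * X ^ 2 + C (b * e 7 + c * e 6) * X ^ 1
      + C (c * e 7) * X ^ 0 := by
    rw [hU]
    simp only [Finset.sum_range_succ, Finset.sum_range_zero, C_add, C_mul]
    ring
  rw [h]
  refine ⟨?_, ?_, ?_, ?_⟩ <;> simp only [coeff_add, coeff_C_mul_X_pow] <;> norm_num

/-- A nonreal root, or a positive root of multiplicity at least `2`, must come from the quadratic
factor, whose discriminant is therefore nonpositive. -/
lemma discrim_nonpos {y₁ y₂ y₃ y₄ y₅ y₆ y₇ b c : ℝ} (h₁ : 0 < y₁) (h₂ : 0 < y₂) (h₃ : 0 < y₃)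
    (h₄ : 0 < y₄) (h₅ : 0 < y₅) (h₆ : 0 < y₆) (h₇ : 0 < y₇) {U : ℝ[X]}
    (hU : U = ((X + C y₁) * (X + C y₂) * (X + C y₃) * (X + C y₄) * (X + C y₅) * (X + C y₆) *
        (X + C y₇)) * (X ^ 2 + C b * X + C c))
    (h : (∃ z : ℂ, aeval z U = 0 ∧ z.im ≠ 0) ∨
        (∃ x : ℝ, 0 < x ∧ 2 ≤ U.rootMultiplicity x)) : b ^ 2 ≤ 4 * c := by
  rcases h with ⟨z, hz, him⟩ | ⟨x, hx, hm⟩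
  · have hne : ∀ y : ℝ, z + (y : ℂ) ≠ 0 := fun y hy => him (by
      simpa using congrArg Complex.im hy)
    rw [hU] at hz
    simp only [map_mul, map_add, map_pow, aeval_X, aeval_C, Complex.coe_algebraMap,
      mul_eq_zero, hne, false_or] at hz
    have hre := congrArg Complex.re hz
    have hi := congrArg Complex.im hz
    simp [pow_two] at hre hi
    have hb : b = -2 * z.re := mul_right_cancel₀ him (by linarith)
    subst hb
    nlinarith [sq_nonneg z.im]
  · generalize hA : (X + C y₁) * (X + C y₂) * (X + C y₃) * (X + C y₄) * (X + C y₅) * (X + C y₆) *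
        (X + C y₇) = A at hU
    have hAx : A.eval x ≠ 0 := by
      rw [← hA]
      simp only [eval_mul, eval_add, eval_X, eval_C]
      positivity
    obtain ⟨R, hR⟩ := (pow_dvd_pow (X - C x) hm).trans (pow_rootMultiplicity_dvd U x)
    have h0 : U.eval x = 0 := by rw [hR]; simp
    have h1 : (derivative U).eval x = 0 := by rw [hR]; simp [derivative_mul, derivative_pow]
    rw [hU] at h0 h1
    rw [eval_mul, mul_eq_zero, or_iff_right hAx] at h0
    rw [derivative_mul, eval_add, eval_mul, eval_mul, h0, mul_zero, zero_add, mul_eq_zero,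
      or_iff_right hAx] at h1
    simp at h0 h1
    have hb : b = -2 * x := by linarith
    subst hb
    nlinarith

/-- There is no monic real degree-9 polynomial whose coefficient signs lie in the closure of
`Σ_{1,7,2}`, `Σ_{1,6,3}` or `Σ_{2,6,2}`, having `7` negative roots counted with multiplicity
and either a nonreal conjugate pair of roots or a positive root of multiplicity at least `2`. -/
theorem stmt14 :
    ¬ ∃ U : Polynomial ℝ, U.Monic ∧ U.natDegree = 9 ∧
      (Closure172 U ∨ Closure163 U ∨ Closure262 U) ∧
      U.roots.countP (fun x => x < 0) = 7 ∧
      ((∃ z : ℂ, Polynomial.aeval z U = 0 ∧ z.im ≠ 0) ∨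
        (∃ x : ℝ, 0 < x ∧ 2 ≤ U.rootMultiplicity x)) := by
  rintro ⟨U, hmonic, hdeg, hsign, h7, hpair⟩
  obtain ⟨y₁, y₂, y₃, y₄, y₅, y₆, y₇, b, c, h₁, h₂, h₃, h₄, h₅, h₆, h₇, hU⟩ :=
    exists_factorization hmonic hdeg h7
  have hbc := discrim_nonpos h₁ h₂ h₃ h₄ h₅ h₆ h₇ hU hpair
  rw [prod_eq_sum_esym] at hU
  obtain ⟨c8, c7, c4, c2⟩ := coeff_mul_quadratic _ b c hU
  have hpos : ∀ k ≤ 7, 0 < esym [y₁, y₂, y₃, y₄, y₅, y₆, y₇] k := fun k hk =>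
    esym_pos_seven h₁ h₂ h₃ h₄ h₅ h₆ h₇ hk
  have hE4 := four_mul_esym_four_le h₁ h₂ h₃ h₄ h₅ h₆ h₇
  have hE6 := four_mul_esym_one_six_le h₁ h₂ h₃ h₄ h₅ h₆ h₇
  have e0 : esym [y₁, y₂, y₃, y₄, y₅, y₆, y₇] 0 = 1 := rfl
  generalize esym [y₁, y₂, y₃, y₄, y₅, y₆, y₇] = e at *
  have p1 := hpos 1 (by norm_num)
  have p2 := hpos 2 (by norm_num)
  have p3 := hpos 3 (by norm_num)
  have p5 := hpos 5 (by norm_num)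
  have p6 := hpos 6 (by norm_num)
  have p7 := hpos 7 (by norm_num)
  rw [e0] at c8 c7
  have hno84 : U.coeff 8 ≤ 0 → U.coeff 4 ≤ 0 → False := by
    intro h8 h4
    rw [c8] at h8
    rw [c4] at h4
    have hs : e 1 ≤ -b := by linarith
    have hs0 : 0 < -b := p1.trans_le hs
    have i1 : -b * (4 * e 4) ≤ -b * (e 1 * e 3) := mul_le_mul_of_nonneg_left hE4 hs0.le
    have i2 : e 1 * (-b * e 3) ≤ -b * (-b * e 3) :=
      mul_le_mul_of_nonneg_right hs (by positivity)
    have i3 : b ^ 2 * e 3 ≤ 4 * c * e 3 := mul_le_mul_of_nonneg_right hbc p3.le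
    nlinarith
  rcases hsign with ⟨h, -⟩ | ⟨h, -⟩ | ⟨-, h, -⟩
  · exact hno84 (h 8 (by norm_num) le_rfl) (h 4 (by norm_num) (by norm_num))
  · exact hno84 (h 8 (by norm_num) le_rfl) (h 4 (by norm_num) (by norm_num))
  · have h7' := h 7 (by norm_num) le_rfl
    have h2' := h 2 le_rfl (by norm_num)
    rw [c7] at h7'
    rw [c2] at h2'
    have hc0 : 0 ≤ c := by nlinarith [sq_nonneg b]
    have hs0 : 0 < -b := by
      by_contra hb
      nlinarith [mul_nonneg (not_lt.1 (fun hb' : b < 0 => hb (by linarith))) p1.le]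
    have hc : 0 < c := by nlinarith
    have i1 : e 2 < -b * e 1 := by linarith
    have i2 : c * e 5 < -b * e 6 := by linarith
    have i3 : e 2 * (c * e 5) < (-b * e 1) * (-b * e 6) :=
      mul_lt_mul'' i1 i2 p2.le (by positivity)
    have i4 : b ^ 2 * (e 1 * e 6) ≤ 4 * c * (e 1 * e 6) :=
      mul_le_mul_of_nonneg_right hbc (by positivity)
    have i5 : c * (4 * (e 1 * e 6)) ≤ c * (e 2 * e 5) := mul_le_mul_of_nonneg_left hE6 hc.le
    linarith
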